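/- (Gross–Sullivant) Let G be a simple graph on vertex set {1,…,n}. If G is d-independent, then MLT(G) ≤ d + 1. -/

import Mathlib

open MeasureTheory Matrix

noncomputable section

/-- The objective function `K ↦ tr(S K) − log det K` of Gaussian maximum likelihood,
where `S` is the sample covariance matrix. -/
def mlObjective {n : ℕ} (S K : Matrix (Fin n) (Fin n) ℝ) : ℝ :=
  (S * K).trace - Real.log K.det

/-- The maximum likelihood threshold of a set `M` of positive definite matrices:
the smallest positive integer `d` such that for Lebesgue-almost every real `n × d`
matrix `X`, the function `K ↦ tr(X Xᵀ K) − log det K` attains a minimum on `M`. -/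
def mlt (n : ℕ) (M : Set (Matrix (Fin n) (Fin n) ℝ)) : ℕ :=
  sInf {d : ℕ | 0 < d ∧
    ∀ᵐ X : Fin n → Fin d → ℝ ∂volume,
      ∃ K ∈ M, ∀ K' ∈ M,
        mlObjective (Matrix.of X * (Matrix.of X)ᵀ) K ≤
          mlObjective (Matrix.of X * (Matrix.of X)ᵀ) K'}

/-- The Gaussian graphical model of a graph `G` on `{1,…,n}`: all symmetric positive
definite matrices whose off-diagonal entries vanish at non-edges of `G`. -/
def graphModel (n : ℕ) (G : SimpleGraph (Fin n)) : Set (Matrix (Fin n) (Fin n) ℝ) :=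
  {K | K.PosDef ∧ ∀ i j, i ≠ j → ¬ G.Adj i j → K i j = 0}

/-- The rigidity vector `R_{ij}(p)`: the block vector in `(ℝ^d)^n` whose `i`-th block is
`p i − p j`, whose `j`-th block is `p j − p i`, and whose other blocks are zero. -/
def rigidityVec {n d : ℕ} (p : Fin n → Fin d → ℝ) (i j : Fin n) : Fin n → Fin d → ℝ :=
  fun k => if k = i then p i - p j else if k = j then p j - p i else 0

/-- A graph `G` is `d`-independent if for Lebesgue-almost every `p : {1,…,n} → ℝ^d`,
the rigidity vectors `{R_{ij}(p) : ij ∈ E(G)}` are linearly independent. -/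
def IsIndepGraph {n : ℕ} (d : ℕ) (G : SimpleGraph (Fin n)) : Prop :=
  ∀ᵐ p : Fin n → Fin d → ℝ ∂volume,
    LinearIndependent ℝ (fun e : {e : Fin n × Fin n // G.Adj e.1 e.2 ∧ e.1 < e.2} =>
      rigidityVec p e.1.1 e.1.2)

lemma ae_transfer {n d : ℕ} {P : (Fin n → Fin d → ℝ) → Prop}
    (h : ∀ᵐ p : Fin n → Fin d → ℝ ∂volume, P p) :
    ∀ᵐ X : Fin n → Fin (d + 1) → ℝ ∂volume,
      (∀ i, X i 0 ≠ 0) ∧ P (fun i k => (X i 0)⁻¹ * X i k.succ) := by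
  have key : ∀ᵐ z : (Fin n → ℝ) × (Fin n → Fin d → ℝ) ∂volume,
      (∀ i, z.1 i ≠ 0) ∧ P (fun i k => (z.1 i)⁻¹ * z.2 i k) := by
    obtain ⟨N, hN, hNm, hN0⟩ := exists_measurable_superset_of_null h
    have hc : ∀ᵐ c : Fin n → ℝ ∂volume, ∀ i, c i ≠ 0 := by
      rw [ae_all_iff]
      intro i
      have : ∀ᵐ x : ℝ ∂volume, x ≠ 0 := by
        simp [ae_iff]
      exact (Measure.quasiMeasurePreserving_eval (μ := fun _ : Fin n => (volume : Measure ℝ)) i).ae this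
    have hm : Measurable (fun z : (Fin n → ℝ) × (Fin n → Fin d → ℝ) =>
        (fun i k => (z.1 i)⁻¹ * z.2 i k : Fin n → Fin d → ℝ)) := by
      fun_prop
    have h2 : (volume : Measure ((Fin n → ℝ) × (Fin n → Fin d → ℝ)))
        ((fun z : (Fin n → ℝ) × (Fin n → Fin d → ℝ) =>
        (fun i k => (z.1 i)⁻¹ * z.2 i k : Fin n → Fin d → ℝ)) ⁻¹' N) = 0 := by
      rw [Measure.volume_eq_prod, Measure.measure_prod_null (hm hNm)]
      filter_upwards [hc] with c hc
      let f : (Fin n → Fin d → ℝ) ≃ₗ[ℝ] (Fin n → Fin d → ℝ) :=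
        LinearEquiv.piCongrRight fun i =>
          LinearEquiv.smulOfNeZero ℝ (Fin d → ℝ) (c i)⁻¹ (inv_ne_zero (hc i))
      have := MeasureTheory.Measure.LinearMap.quasiMeasurePreserving (volume : Measure (Fin n → Fin d → ℝ))
        (f : (Fin n → Fin d → ℝ) →ₗ[ℝ] (Fin n → Fin d → ℝ)) (LinearEquiv.isUnit_det' f).ne_zero
      exact this.preimage_null hN0
    have hc' : ∀ᵐ z : (Fin n → ℝ) × (Fin n → Fin d → ℝ) ∂volume, ∀ i, z.1 i ≠ 0 :=
      Measure.quasiMeasurePreserving_fst.ae hc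
    have h3 := measure_eq_zero_iff_ae_notMem.1 h2
    filter_upwards [hc', h3] with z hz hz'
    refine ⟨hz, ?_⟩
    by_contra hcon
    exact hz' (hN hcon)
  have e1 := volume_preserving_pi (fun _ : Fin n => volume_preserving_piFinSuccAbove (fun _ : Fin (d+1) => ℝ) 0)
  have e2 := volume_measurePreserving_arrowProdEquivProdArrow ℝ (Fin d → ℝ) (Fin n)
  have := (e2.comp e1).quasiMeasurePreserving.ae key
  filter_upwards [this] with X hX
  exact hX

lemma stress_zero {n d : ℕ} (G : SimpleGraph (Fin n)) (X : Fin n → Fin (d + 1) → ℝ)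
    (hX : ∀ i, X i 0 ≠ 0)
    (hp : LinearIndependent ℝ (fun e : {e : Fin n × Fin n // G.Adj e.1 e.2 ∧ e.1 < e.2} =>
      rigidityVec (fun i (k : Fin d) => (X i 0)⁻¹ * X i k.succ) e.1.1 e.1.2))
    (K : Matrix (Fin n) (Fin n) ℝ) (hK : K.IsSymm)
    (hG : ∀ i j, i ≠ j → ¬ G.Adj i j → K i j = 0)
    (h0 : ∀ i k, ∑ j, K i j * X j k = 0) : K = 0 := by
  classical
  set p : Fin n → Fin d → ℝ := fun i (k : Fin d) => (X i 0)⁻¹ * X i k.succ with hpdef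
  rw [Fintype.linearIndependent_iff] at hp
  have hsym : ∀ i j, K i j = K j i := fun i j => hK.apply j i
  have hsum : ∀ i k, ∑ j, X i 0 * K i j * X j 0 * (p i k - p j k) = 0 := by
    intro i k
    have a := h0 i 0
    have b := h0 i k.succ
    have : ∀ j, X i 0 * K i j * X j 0 * (p i k - p j k) =
        X i 0 * p i k * (K i j * X j 0) - X i 0 * (K i j * X j k.succ) := by
      intro j
      have := hX j
      have := hX i
      simp only [hpdef]
      field_simp
    simp only [this, Finset.sum_sub_distrib, ← Finset.mul_sum, a, b]
    simp
  have hz := hp (fun e => X e.1.1 0 * K e.1.1 e.1.2 * X e.1.2 0) ?_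
  · have hoff : ∀ i j, i < j → K i j = 0 := by
      intro i j hij
      by_cases hA : G.Adj i j
      · have := hz ⟨(i, j), hA, hij⟩
        simpa [hX] using this
      · exact hG i j hij.ne hA
    have hoff' : ∀ i j, i ≠ j → K i j = 0 := by
      intro i j hij
      rcases lt_or_gt_of_ne hij with h | h
      · exact hoff i j h
      · rw [hsym]; exact hoff j i h
    ext i j
    by_cases hij : i = j
    · subst hij
      have := h0 i 0
      rw [Finset.sum_eq_single i] at this
      · simpa [hX] using this
      · intro j _ hj; rw [hoff' i j hj.symm]; simp
      · simp
    · exact hoff' i j hij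
  · funext v k
    rw [Finset.sum_apply, Finset.sum_apply]
    simp only [Pi.smul_apply, smul_eq_mul, Pi.zero_apply]
    have step1 : ∑ e : {e : Fin n × Fin n // G.Adj e.1 e.2 ∧ e.1 < e.2},
        X e.1.1 0 * K e.1.1 e.1.2 * X e.1.2 0 * rigidityVec p e.1.1 e.1.2 v k =
        ∑ e : Fin n × Fin n, if e.1 < e.2 then
          X e.1 0 * K e.1 e.2 * X e.2 0 * rigidityVec p e.1 e.2 v k else 0 := by
      rw [← Finset.sum_subtype (Finset.univ.filter fun e : Fin n × Fin n => G.Adj e.1 e.2 ∧ e.1 < e.2)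
        (by simp) (fun e => X e.1 0 * K e.1 e.2 * X e.2 0 * rigidityVec p e.1 e.2 v k),
        Finset.sum_filter]
      refine Finset.sum_congr rfl fun e _ => ?_
      by_cases hlt : e.1 < e.2
      · by_cases hA : G.Adj e.1 e.2
        · simp [hlt, hA]
        · simp [hA, hG _ _ hlt.ne hA]
      · simp [hlt]
    have step2 : ∀ i j, (if i < j then
          X i 0 * K i j * X j 0 * rigidityVec p i j v k else 0) =
        (if i = v then (if v < j then X v 0 * K v j * X j 0 * (p v k - p j k) else 0) else 0) +
        (if j = v then (if i < v then X v 0 * K v i * X i 0 * (p v k - p i k) else 0) else 0) := by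
      intro i j
      by_cases hij : i < j
      · by_cases hi : i = v
        · subst hi
          simp [hij, hij.ne', rigidityVec]
        · by_cases hj : j = v
          · subst hj
            simp [hij, hij.ne, hij.ne', rigidityVec, hsym j i]
            left; ring
          · simp [hi, hj, Ne.symm hi, Ne.symm hj, rigidityVec]
      · rw [if_neg hij]
        split_ifs <;> simp_all
    rw [step1, Fintype.sum_prod_type]
    refine Eq.trans ?_ (hsum v k)
    simp only [step2, Finset.sum_add_distrib]
    rw [Finset.sum_comm]
    simp only [Finset.sum_ite_eq', Finset.mem_univ, if_true]
    rw [← Finset.sum_add_distrib]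
    refine Finset.sum_congr rfl fun j _ => ?_
    rcases lt_trichotomy v j with hlt | rfl | hlt
    · simp [hlt, hlt.not_gt]
    · simp
    · simp [hlt, hlt.not_gt]

lemma psd_entry_le {n : ℕ} {K : Matrix (Fin n) (Fin n) ℝ} (hK : K.PosSemidef) (i j : Fin n) :
    |K i j| ≤ K.trace := by
  have hd : ∀ i, K i i ≤ K.trace := fun i =>
    Finset.single_le_sum (f := fun i => K i i) (fun i _ => hK.diag_nonneg) (Finset.mem_univ i)
  have hs : K j i = K i j := by simpa using hK.1.apply i j
  have h1 := hK.dotProduct_mulVec_nonneg (Pi.single i 1 + Pi.single j 1)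
  have h2 := hK.dotProduct_mulVec_nonneg (Pi.single i 1 - Pi.single j 1)
  simp [Matrix.mulVec_add, Matrix.mulVec_sub, add_dotProduct, sub_dotProduct, dotProduct_add, dotProduct_sub] at h1 h2
  have := hd i
  have := hd j
  rw [abs_le]
  constructor <;> linarith

lemma psd_det_le {n : ℕ} {K : Matrix (Fin n) (Fin n) ℝ} (hK : K.PosSemidef) :
    K.det ≤ K.trace ^ n := by
  rw [hK.1.det_eq_prod_eigenvalues, hK.1.trace_eq_sum_eigenvalues]
  simp only [RCLike.ofReal_real_eq_id, id]
  calc ∏ i, hK.1.eigenvalues i ≤ ∏ _i : Fin n, ∑ j, hK.1.eigenvalues j :=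
        Finset.prod_le_prod (fun i _ => hK.eigenvalues_nonneg i) fun i _ =>
          Finset.single_le_sum (fun j _ => hK.eigenvalues_nonneg j) (Finset.mem_univ i)
    _ = _ := by simp

lemma isClosed_psd {n : ℕ} : IsClosed {K : Matrix (Fin n) (Fin n) ℝ | K.PosSemidef} := by
  simp only [posSemidef_iff_dotProduct_mulVec, Set.ofPred_and, Set.ofPred_forall]
  refine IsClosed.inter ?_ (isClosed_iInter fun x => ?_)
  · exact isClosed_eq (by fun_prop) (by fun_prop)
  · exact isClosed_le (by fun_prop) (by fun_prop)

lemma isCompact_slice {n : ℕ} (G : SimpleGraph (Fin n)) (T : ℝ) :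
    IsCompact {K : Matrix (Fin n) (Fin n) ℝ | K.PosSemidef ∧
      (∀ i j, i ≠ j → ¬ G.Adj i j → K i j = 0) ∧ K.trace ≤ T} := by
  have hb : IsCompact {K : Matrix (Fin n) (Fin n) ℝ | ∀ i j, K i j ∈ Set.Icc (-T) T} := by
    have := isCompact_pi_infinite (X := fun _ : Fin n => Fin n → ℝ)
      (s := fun _ => {v | ∀ j, v j ∈ Set.Icc (-T) T})
      (fun _ => isCompact_pi_infinite (fun _ => isCompact_Icc))
    exact this
  refine hb.of_isClosed_subset ?_ ?_
  · refine isClosed_psd.inter (IsClosed.inter ?_ ?_)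
    · change IsClosed {K : Matrix (Fin n) (Fin n) ℝ | ∀ i j, i ≠ j → ¬ G.Adj i j → K i j = 0}
      simp only [Set.ofPred_forall]
      refine isClosed_iInter fun i => isClosed_iInter fun j => isClosed_iInter fun _ =>
        isClosed_iInter fun _ => ?_
      exact isClosed_eq (by fun_prop) (by fun_prop)
    · change IsClosed {K : Matrix (Fin n) (Fin n) ℝ | K.trace ≤ T}
      exact isClosed_le (by fun_prop) (by fun_prop)
  · rintro K ⟨h1, -, h3⟩ i j
    exact abs_le.1 ((psd_entry_le h1 i j).trans h3)

lemma exists_min {n : ℕ} (G : SimpleGraph (Fin n)) (S : Matrix (Fin n) (Fin n) ℝ)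
    (hS : ∀ K : Matrix (Fin n) (Fin n) ℝ, K.PosSemidef → 0 ≤ (S * K).trace)
    (hS0 : ∀ K : Matrix (Fin n) (Fin n) ℝ, K.PosSemidef →
      (∀ i j, i ≠ j → ¬ G.Adj i j → K i j = 0) → (S * K).trace = 0 → K = 0) :
    ∃ K ∈ graphModel n G, ∀ K' ∈ graphModel n G, mlObjective S K ≤ mlObjective S K' := by
  rcases Nat.eq_zero_or_pos n with rfl | hn
  · exact ⟨1, ⟨PosDef.one, fun i => i.elim0⟩, fun K' _ => by rw [Subsingleton.elim K' 1]⟩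
  have : Nonempty (Fin n) := ⟨⟨0, hn⟩⟩
  have htc : Continuous fun K : Matrix (Fin n) (Fin n) ℝ => (S * K).trace := by fun_prop
  have hdc : Continuous fun K : Matrix (Fin n) (Fin n) ℝ => K.det := by fun_prop
  have hrc : Continuous fun K : Matrix (Fin n) (Fin n) ℝ => K.trace := by fun_prop
  have h1G : ∀ i j, i ≠ j → ¬ G.Adj i j → (1 : Matrix (Fin n) (Fin n) ℝ) i j = 0 :=
    fun i j h _ => Matrix.one_apply_ne h
  -- the epsilon
  obtain ⟨ε, hε, hεK⟩ : ∃ ε > 0, ∀ K : Matrix (Fin n) (Fin n) ℝ, K.PosDef →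
      (∀ i j, i ≠ j → ¬ G.Adj i j → K i j = 0) → ε * K.trace ≤ (S * K).trace := by
    have hcomp := (isCompact_slice G 1).inter_right
      (isClosed_eq hrc (continuous_const (y := (1 : ℝ))))
    have hscale : ∀ K : Matrix (Fin n) (Fin n) ℝ, K.PosDef →
      (∀ i j, i ≠ j → ¬ G.Adj i j → K i j = 0) → (K.trace)⁻¹ • K ∈ {K : Matrix (Fin n) (Fin n) ℝ | K.PosSemidef ∧
      (∀ i j, i ≠ j → ¬ G.Adj i j → K i j = 0) ∧ K.trace ≤ 1} ∩ {K | K.trace = 1} := by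
      intro K hK hKG
      have ht := hK.trace_pos
      have : ((K.trace)⁻¹ • K).trace = 1 := by
        rw [Matrix.trace_smul, smul_eq_mul, inv_mul_cancel₀ ht.ne']
      exact ⟨⟨hK.posSemidef.smul (inv_nonneg.2 ht.le),
        fun i j h1 h2 => by simp [hKG i j h1 h2], this.le⟩, this⟩
    obtain ⟨K0, ⟨⟨hK0, hK0G, -⟩, hK0t⟩, hmin⟩ := hcomp.exists_isMinOn ⟨_, hscale 1 PosDef.one h1G⟩ htc.continuousOn
    refine ⟨(S * K0).trace, lt_of_le_of_ne (hS K0 hK0) fun h => ?_, ?_⟩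
    · have := hS0 K0 hK0 hK0G h.symm
      rw [this] at hK0t
      simp at hK0t
    · intro K hK hKG
      have ht := hK.trace_pos
      have := hmin (hscale K hK hKG)
      simp only [Set.mem_ofPred_eq, Matrix.mul_smul, Matrix.trace_smul, smul_eq_mul] at this
      rwa [← div_eq_inv_mul, le_div_iff₀ ht] at this
  have hnR : (0 : ℝ) < n := by exact_mod_cast hn
  set F := mlObjective S 1 with hF
  set a : ℝ := ε / (2 * n) with ha
  have hapos : 0 < a := by positivity
  set T : ℝ := 2 / ε * (F - n - n * Real.log a) with hT
  have hsub : ∀ K ∈ graphModel n G, mlObjective S K ≤ F →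
      K.trace ≤ T ∧ Real.exp (-F) ≤ K.det := by
    rintro K ⟨hK, hKG⟩ hle
    have ht := hK.trace_pos
    have hd := hK.det_pos
    have h1 := hεK K hK hKG
    unfold mlObjective at hle
    constructor
    · have h2 : Real.log K.det ≤ n * Real.log K.trace := by
        rw [← Real.log_pow]
        exact Real.log_le_log hd (psd_det_le hK.posSemidef)
      have h3 : Real.log K.trace ≤ K.trace * a - 1 - Real.log a := by
        have := Real.log_le_sub_one_of_pos (mul_pos ht hapos)
        rw [Real.log_mul ht.ne' hapos.ne'] at this
        linarith
      have h4 : n * Real.log K.trace ≤ n * (K.trace * a - 1 - Real.log a) :=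
        mul_le_mul_of_nonneg_left h3 hnR.le
      have h5 : n * (K.trace * a - 1 - Real.log a) = ε * K.trace / 2 - n - n * Real.log a := by
        rw [ha]; field_simp
      have h6 : ε * K.trace / 2 ≤ F - n - n * Real.log a := by linarith
      have h7 : K.trace = 2 / ε * (ε * K.trace / 2) := by field_simp
      rw [h7, hT]
      exact mul_le_mul_of_nonneg_left h6 (by positivity)
    · rw [← Real.le_log_iff_exp_le hd]
      have := hS K hK.posSemidef
      linarith
  have hC := (isCompact_slice G T).inter_right (isClosed_le (continuous_const (y := Real.exp (-F))) hdc)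
  have hmem : ∀ K ∈ graphModel n G, mlObjective S K ≤ F → K ∈ {K : Matrix (Fin n) (Fin n) ℝ | K.PosSemidef ∧
      (∀ i j, i ≠ j → ¬ G.Adj i j → K i j = 0) ∧ K.trace ≤ T} ∩ {K | Real.exp (-F) ≤ K.det} :=
    fun K hK hle => ⟨⟨hK.1.posSemidef, hK.2, (hsub K hK hle).1⟩, (hsub K hK hle).2⟩
  have h1M : (1 : Matrix (Fin n) (Fin n) ℝ) ∈ graphModel n G := ⟨PosDef.one, h1G⟩
  obtain ⟨K0, ⟨⟨hK0, hK0G, -⟩, hK0d⟩, hmin⟩ := hC.exists_isMinOn ⟨1, hmem 1 h1M le_rfl⟩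
    (f := mlObjective S) (by
      unfold mlObjective
      refine htc.continuousOn.sub (hdc.continuousOn.log ?_)
      rintro K ⟨-, hK⟩
      exact ((Real.exp_pos _).trans_le hK).ne')
  refine ⟨K0, ⟨hK0.posDef_iff_det_ne_zero.2 ((Real.exp_pos _).trans_le hK0d).ne', hK0G⟩, ?_⟩
  intro K' hK'
  by_cases hle : mlObjective S K' ≤ F
  · exact hmin (hmem K' hK' hle)
  · exact (hmin (hmem 1 h1M le_rfl)).trans (not_le.1 hle).le

lemma trace_gram {n m : ℕ} (X : Matrix (Fin n) (Fin m) ℝ) (K : Matrix (Fin n) (Fin n) ℝ) :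
    (X * Xᵀ * K).trace = ∑ k, star (fun i => X i k) ⬝ᵥ K *ᵥ (fun i => X i k) := by
  rw [Matrix.mul_assoc, Matrix.trace_mul_comm, Matrix.mul_assoc, Matrix.trace]
  rfl

/-- Gross–Sullivant: if `G` is `d`-independent, then `MLT(G) ≤ d + 1`. -/
theorem mlt_le_of_indep (n d : ℕ) (G : SimpleGraph (Fin n))
    (h : IsIndepGraph d G) :
    mlt n (graphModel n G) ≤ d + 1 := by
  refine Nat.sInf_le ⟨Nat.succ_pos d, ?_⟩
  filter_upwards [ae_transfer h] with X hX
  refine exists_min G _ ?_ ?_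
  · intro K hK
    rw [trace_gram]
    exact Finset.sum_nonneg fun k _ => hK.dotProduct_mulVec_nonneg _
  · intro K hK hKG h0
    rw [trace_gram, Finset.sum_eq_zero_iff_of_nonneg
      (fun k _ => hK.dotProduct_mulVec_nonneg _)] at h0
    refine stress_zero G X hX.1 hX.2 K (by simpa using hK.1) hKG ?_
    intro i k
    have := (hK.dotProduct_mulVec_zero_iff _).1 (h0 k (Finset.mem_univ k))
    exact congrFun this i
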